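/- Let n ≥ 3 and let 𝒜 = {[A₁],…,[A_r]} be a malnormal subgroup system of F_n with r ≥ 1, with L, Γ_i, 𝒞 and S_k as in the context. Then for every integer k ≥ 1, the set S_k is nonempty: there exists w ∈ F_n with |w| = k whose reduced word does not contain the reduced word of any element of 𝒞 as a contiguous subword. -/

import Mathlib

/-!
Let `a` be a nontrivial element of a conjugate `B` of some `A_i`, of minimal length in its conjugacy
class. Its reduced word is cyclically reduced, so the reduced word of `a ^ k` is the `k`-fold
repetition of it. If `q` is a prefix of that periodic word, then `q⁻¹ a q` is spelled by a cyclic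
rotation of the word of `a`, so it is no longer than `a`: the path from `1` to `a ^ k` stays on the
axis of `a`, inside `T_B`. Let `w` be the initial segment of length `k` of this path. For a subword
`x` of `w`, say `w = s x t`, translating by `s⁻¹` puts `γ_x` inside the tree of `s⁻¹ B s`, again a
conjugate of `A_i` whose tree contains `1`. Hence `x ∉ 𝒞`.
-/

open scoped Classical
open MeasureTheory

noncomputable section

namespace RelCurr

/-- The alphabet `𝔄 = ℬ ∪ ℬ⁻¹`: a letter is a generator together with a sign. -/
abbrev Letter (n : ℕ) := Fin n × Bool

/-- The inverse of a letter. -/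
def linv {n : ℕ} (x : Letter n) : Letter n := (x.1, !x.2)

/-- The free group of rank `n` on the basis `Fin n`. -/
abbrev F (n : ℕ) := FreeGroup (Fin n)

/-- The reduced word of an element of `F n`. -/
def rword {n : ℕ} (g : F n) : List (Letter n) := FreeGroup.toWord g

/-- The length `|g|` of the reduced word of `g`. -/
def wlen {n : ℕ} (g : F n) : ℕ := (rword g).length

/-- The single-letter element of `F n` given by a letter. -/
def letterE {n : ℕ} (b : Letter n) : F n := FreeGroup.mk [b]

/-- The conjugate subgroup `g A g⁻¹`. -/
def conjSub {n : ℕ} (g : F n) (A : Subgroup (F n)) : Subgroup (F n) :=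
  Subgroup.map (MulAut.conj g).toMonoidHom A

/-- A subgroup `A` is malnormal if `xAx⁻¹ ∩ A = {1}` for every `x ∉ A`. -/
def Malnormal {n : ℕ} (A : Subgroup (F n)) : Prop :=
  ∀ x : F n, x ∉ A → conjSub x A ⊓ A = ⊥

/-- The word metric on the Cayley tree `T`. -/
def dist' {n : ℕ} (x y : F n) : ℕ := wlen (x⁻¹ * y)

/-- The cyclically reduced length of `a`. -/
def cycLen {n : ℕ} (a : F n) : ℕ := sInf { m | ∃ h : F n, wlen (h⁻¹ * a * h) = m }

/-- The vertex set of the minimal `A`-invariant subtree `T_A` of the Cayley tree: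
the union of the axes of the nontrivial elements of `A`. -/
def treeVerts {n : ℕ} (A : Subgroup (F n)) : Set (F n) :=
  { h | ∃ a ∈ A, a ≠ 1 ∧ wlen (h⁻¹ * a * h) = cycLen a }

/-- `γ_w ⊆ S`: every prefix of the reduced word of `w` lies in the vertex set `S`. -/
def pathIn {n : ℕ} (w : F n) (S : Set (F n)) : Prop :=
  ∀ m ≤ wlen w, FreeGroup.mk ((rword w).take m) ∈ S

/-- An element is cyclically reduced if the last letter of its reduced word is not the
inverse of the first letter. -/
def CyclicallyReduced {n : ℕ} (w : F n) : Prop :=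
  ∀ x y : Letter n, (rword w).head? = some x → (rword w).getLast? = some y → y ≠ linv x

/-- `v` is a length-one extension of `w`. -/
def LengthOneExt {n : ℕ} (w v : F n) : Prop :=
  ∃ b : Letter n, v = w * letterE b ∧ wlen v = wlen w + 1

/-- `a` is an extension of `w`: the reduced word of `w` is a proper prefix of that of `a`. -/
def ExtensionOf {n : ℕ} (w a : F n) : Prop :=
  rword w <+: rword a ∧ wlen w < wlen a

/-- `g` is a proper power. -/
def IsProperPower {n : ℕ} (g : F n) : Prop := ∃ (h : F n) (k : ℕ), 2 ≤ k ∧ g = h ^ k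

section System

variable {n r : ℕ} (A : Fin r → Subgroup (F n))

/-- `[B] ∈ 𝒜`, i.e. `B` is a conjugate of one of the subgroups of the system. -/
def InSystem (B : Subgroup (F n)) : Prop := ∃ (i : Fin r) (g : F n), B = conjSub g (A i)

/-- The family `A` represents a subgroup system: finite rank subgroups distinct
from `{1}` and `F n`. -/
def IsSystem : Prop := (∀ i, (A i).FG) ∧ (∀ i, A i ≠ ⊥) ∧ (∀ i, A i ≠ ⊤)

/-- The subgroup system is malnormal. -/
def SystemMalnormal : Prop :=
  (∀ i, Malnormal (A i)) ∧
  ∀ B₁ B₂ : Subgroup (F n), InSystem A B₁ → InSystem A B₂ → B₁ ≠ B₂ → B₁ ⊓ B₂ = ⊥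

/-- `g` is `𝒜`-peripheral: trivial or contained in a conjugate of one of the `A i`. -/
def Peripheral (g : F n) : Prop := g = 1 ∨ ∃ B, InSystem A B ∧ g ∈ B

/-- The diameter of the intersection of the trees of two distinct subgroups of the
system is at most `L`. -/
def DiamBound (L : ℕ) : Prop :=
  ∀ B₁ B₂ : Subgroup (F n), InSystem A B₁ → InSystem A B₂ → B₁ ≠ B₂ →
    ∀ x ∈ treeVerts B₁ ∩ treeVerts B₂, ∀ y ∈ treeVerts B₁ ∩ treeVerts B₂, dist' x y ≤ L

/-- `B ∈ Γ_i`: `B` is a conjugate of `A i` whose tree contains the base point `1`. -/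
def GammaMem (i : Fin r) (B : Subgroup (F n)) : Prop :=
  (∃ g : F n, B = conjSub g (A i)) ∧ (1 : F n) ∈ treeVerts B

/-- The finite set `𝒞` of words of length `L+2` whose path is contained in no tree
`T_B` with `B ∈ Γ_i`, for every `i`. -/
def Ccal (L : ℕ) : Set (F n) :=
  { w | wlen w = L + 2 ∧ ∀ (i : Fin r) (B : Subgroup (F n)), GammaMem A i B →
      ¬ pathIn w (treeVerts B) }

/-- `F_n − 𝒜`: the words containing an element of `𝒞` as a contiguous subword. -/
def FmA (L : ℕ) : Set (F n) := { w | ∃ x ∈ Ccal A L, rword x <:+: rword w }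

/-- `S_k`: words of length `k` not containing any element of `𝒞` as a subword. -/
def Sk (L k : ℕ) : Set (F n) := { w | wlen w = k ∧ w ∉ FmA A L }

end System

/-! ### The boundary of `F n` -/

/-- An infinite reduced word. -/
def IsRed {n : ℕ} (ξ : ℕ → Letter n) : Prop := ∀ i, ξ (i + 1) ≠ linv (ξ i)

/-- The Gromov boundary `∂F_n`, realized as the space of infinite reduced words,
topologized as a subspace of the product space. -/
def Boundary (n : ℕ) : Type := { ξ : ℕ → Letter n // IsRed ξ }

instance {n : ℕ} : TopologicalSpace (Boundary n) :=
  instTopologicalSpaceSubtype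

/-- The length-`m` prefix of a boundary point. -/
def bpre {n : ℕ} (ξ : Boundary n) (m : ℕ) : List (Letter n) :=
  (List.range m).map ξ.1

/-- The reduced word of `w` is a prefix of the infinite word `ξ`. -/
def wordPrefixOf {n : ℕ} (w : F n) (ξ : Boundary n) : Prop :=
  bpre ξ (wlen w) = rword w

/-- The boundary (limit set) `∂A ⊆ ∂F_n` of a subgroup `A`. -/
def limitSet {n : ℕ} (A : Subgroup (F n)) : Set (Boundary n) :=
  { ξ | ∀ m : ℕ, ∃ a ∈ A, bpre ξ m <+: rword a }

/-- `ξ = g^{+∞}`: `ξ` is the limit of the reduced words of the powers of `g`. -/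
def IsPosLimit {n : ℕ} (g : F n) (ξ : Boundary n) : Prop :=
  ∀ m : ℕ, ∃ N : ℕ, ∀ k ≥ N, bpre ξ m <+: rword (g ^ k)

/-- The number of letters cancelled when concatenating the word `l` with the
infinite reduced word `ξ`. -/
def cancelLen {n : ℕ} (l : List (Letter n)) (ξ : ℕ → Letter n) : ℕ :=
  sSup { j | j ≤ l.length ∧ ∀ i < j, l.reverse[i]? = some (linv (ξ i)) }

/-- The sequence underlying the action of `g` on a boundary point: left multiplication
followed by cancellation. -/
def actSeq {n : ℕ} (g : F n) (ξ : ℕ → Letter n) : ℕ → Letter n :=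
  fun m =>
    if h : m < (rword g).length - cancelLen (rword g) ξ then
      (rword g).get ⟨m, by omega⟩
    else ξ (m - ((rword g).length - cancelLen (rword g) ξ) + cancelLen (rword g) ξ)

/-- The action of `F n` on its boundary: left multiplication followed by cancellation.
(The sequence `actSeq g ξ.1` is always reduced, so the first branch always applies.) -/
def bAct {n : ℕ} (g : F n) (ξ : Boundary n) : Boundary n :=
  if h : IsRed (actSeq g ξ.1) then ⟨actSeq g ξ.1, h⟩ else ξ

/-! ### The double boundary -/

/-- The diagonal action of `F n` on `Sym2 (∂F_n)`, whose restriction to the set of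
non-diagonal classes is the action on the double boundary `∂²F_n`. -/
def dbAct {n : ℕ} (g : F n) : Sym2 (Boundary n) → Sym2 (Boundary n) := Sym2.map (bAct g)

/-- `∂²𝒜`: the classes `{ξ,η}` with both endpoints in `g·∂A_i = ∂(gA_ig⁻¹)` for some
`i` and `g`. -/
def dblBndA {n r : ℕ} (A : Fin r → Subgroup (F n)) : Set (Sym2 (Boundary n)) :=
  { z | ∃ (i : Fin r) (g : F n) (ξ η : Boundary n), z = s(ξ, η) ∧
      ξ ∈ limitSet (conjSub g (A i)) ∧ η ∈ limitSet (conjSub g (A i)) }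

/-- The double boundary `∂²(F_n,𝒜)` of `F n` relative to `𝒜`, as a subset of
`Sym2 (∂F_n)`: non-diagonal classes not lying in `∂²𝒜`. -/
def relSet {n r : ℕ} (A : Fin r → Subgroup (F n)) : Set (Sym2 (Boundary n)) :=
  { z | ¬ z.IsDiag } \ dblBndA A

/-- The cylinder set `C(γ_w) ⊆ ∂²F_n` of the geodesic path from `1` to `w`. -/
def cylinder {n : ℕ} (w : F n) : Set (Sym2 (Boundary n)) :=
  { z | ∃ ξ η : Boundary n, z = s(ξ, η) ∧ ξ.1 0 ≠ η.1 0 ∧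
      (wordPrefixOf w ξ ∨ wordPrefixOf w η) }

instance {n : ℕ} : MeasurableSpace (Sym2 (Boundary n)) := borel _

/-- The action of `g ∈ F n` on `∂²(F_n,𝒜)`. (The action of `F n` preserves
`∂²(F_n,𝒜)`, so the first branch always applies.) -/
def relAct {n r : ℕ} (A : Fin r → Subgroup (F n)) (g : F n) (z : ↥(relSet A)) :
    ↥(relSet A) :=
  if h : dbAct g z.1 ∈ relSet A then ⟨dbAct g z.1, h⟩ else z

/-- The cylinder `C(γ_w)` as a subset of `∂²(F_n,𝒜)`. -/
def relCyl {n r : ℕ} (A : Fin r → Subgroup (F n)) (w : F n) : Set ↥(relSet A) :=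
  Subtype.val ⁻¹' cylinder w

/-- The translated cylinder `g·C(γ_w)` as a subset of `∂²(F_n,𝒜)`. -/
def relCylG {n r : ℕ} (A : Fin r → Subgroup (F n)) (g w : F n) : Set ↥(relSet A) :=
  Subtype.val ⁻¹' (dbAct g '' cylinder w)

/-- A relative current on `(F_n,𝒜)`: an `F_n`-invariant Radon measure on the
locally compact space `∂²(F_n,𝒜)` (finite on compacts, outer regular, inner regular
on open sets). -/
def IsRelCurrent {n r : ℕ} (A : Fin r → Subgroup (F n)) (μ : Measure ↥(relSet A)) : Prop :=
  (∀ (g : F n) (s : Set ↥(relSet A)), MeasurableSet s → μ (relAct A g ⁻¹' s) = μ s) ∧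
  μ.Regular

/-- The `F_n`-orbit of a point of `Sym2 (∂F_n)`, inside `∂²(F_n,𝒜)`. -/
def orbitOf {n r : ℕ} (A : Fin r → Subgroup (F n)) (z : Sym2 (Boundary n)) :
    Set ↥(relSet A) :=
  { y | ∃ h : F n, (y : Sym2 (Boundary n)) = dbAct h z }


section PeriodicWords

lemma exists_length_eq_append_comm_of_prefix_flatten_replicate {β : Type*} {l q : List β} {k : ℕ}
    (hq : q <+: (List.replicate k l).flatten) :
    ∃ v : List β, v.length = l.length ∧ l ++ q = q ++ v := by
  have hcomm : l ++ (List.replicate k l).flatten = (List.replicate k l).flatten ++ l := by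
    rw [← List.flatten_cons, ← List.replicate_succ, List.replicate_succ', List.flatten_concat]
  have hq_next : q <+: (List.replicate k l).flatten ++ l := hq.trans (List.prefix_append _ _)
  have hlq_next : l ++ q <+: (List.replicate k l).flatten ++ l :=
    hcomm ▸ (List.prefix_append_right_inj l).mpr hq
  obtain ⟨v, hv⟩ := List.prefix_of_prefix_length_le hq_next hlq_next (by simp)
  have hlen := congrArg List.length hv
  simp only [List.length_append] at hlen
  exact ⟨v, by omega, hv.symm⟩

variable {α : Type*} [DecidableEq α]

lemma norm_conj_mk_le_of_prefix_flatten_replicate {l q : List (α × Bool)} {k : ℕ}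
    (hq : q <+: (List.replicate k l).flatten) :
    ((FreeGroup.mk q)⁻¹ * FreeGroup.mk l * FreeGroup.mk q).norm ≤ l.length := by
  obtain ⟨v, hlen, hv⟩ := exists_length_eq_append_comm_of_prefix_flatten_replicate hq
  have hconj : (FreeGroup.mk q)⁻¹ * FreeGroup.mk l * FreeGroup.mk q = FreeGroup.mk v := by
    rw [mul_assoc, FreeGroup.mul_mk, hv, ← FreeGroup.mul_mk, inv_mul_cancel_left]
  rw [hconj, ← hlen]
  exact FreeGroup.norm_mk_le

lemma isCyclicallyReduced_toWord_of_forall_norm_le_conj {a : FreeGroup α}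
    (ha : ∀ h : FreeGroup α, a.norm ≤ (h⁻¹ * a * h).norm) :
    FreeGroup.IsCyclicallyReduced a.toWord := by
  have hsplit := FreeGroup.reduceCyclically.conj_conjugator_reduceCyclically a.toWord
  have hcore := FreeGroup.reduceCyclically.isCyclicallyReduced (FreeGroup.isReduced_toWord (x := a))
  set c := FreeGroup.reduceCyclically.conjugator a.toWord
  set v := FreeGroup.reduceCyclically a.toWord
  have hconj : (FreeGroup.mk c)⁻¹ * a * FreeGroup.mk c = FreeGroup.mk v := by
    rw [← FreeGroup.mk_toWord (x := a), ← hsplit, ← FreeGroup.mul_mk, ← FreeGroup.mul_mk,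
      ← FreeGroup.inv_mk]
    group
  have hle : a.norm ≤ v.length := (ha (FreeGroup.mk c)).trans (hconj ▸ FreeGroup.norm_mk_le)
  have hnorm : a.norm = c.length + v.length + c.length := by
    rw [FreeGroup.norm, ← hsplit]
    simp only [List.length_append, FreeGroup.invRev_length]
  -- A nonempty conjugator could be removed to shorten `a`.
  have hc : c = [] := List.length_eq_zero_iff.mp (by omega)
  have hv : v = a.toWord := by simpa [hc] using hsplit
  rwa [← hv]

lemma toWord_pow_of_isCyclicallyReduced {a : FreeGroup α}
    (ha : FreeGroup.IsCyclicallyReduced a.toWord) (k : ℕ) :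
    (a ^ k).toWord = (List.replicate k a.toWord).flatten := by
  rw [FreeGroup.toWord_pow, (ha.flatten_replicate k).isReduced.reduce_eq]

end PeriodicWords

section Paths

variable {n : ℕ} {w x : F n} {S : Set (F n)}

lemma pathIn_iff_forall_prefix : pathIn w S ↔ ∀ q, q <+: rword w → FreeGroup.mk q ∈ S := by
  refine ⟨fun h q hq ↦ ?_, fun h m _ ↦ h _ (List.take_prefix m _)⟩
  rw [List.prefix_iff_eq_take.mp hq]
  exact h _ hq.length_le

lemma rword_mk_of_infix {l : List (Letter n)} (hl : l <:+: rword w) :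
    rword (FreeGroup.mk l) = l := by
  rw [rword, FreeGroup.toWord_mk, (FreeGroup.isReduced_toWord.infix hl).reduce_eq]

lemma pathIn.exists_wlen_eq (hw : pathIn w S) {k : ℕ} (hk : k ≤ wlen w) :
    ∃ v : F n, wlen v = k ∧ pathIn v S := by
  have hprefix : (rword w).take k <+: rword w := List.take_prefix k _
  have hword := rword_mk_of_infix hprefix.isInfix
  refine ⟨FreeGroup.mk ((rword w).take k), ?_, pathIn_iff_forall_prefix.mpr fun q hq ↦ ?_⟩
  · rw [wlen, hword, List.length_take_of_le hk]
  · exact pathIn_iff_forall_prefix.mp hw q ((hword ▸ hq).trans hprefix)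

lemma pathIn.exists_translate_of_infix (hw : pathIn w S) (hx : rword x <:+: rword w) :
    ∃ g : F n, pathIn x {h | g * h ∈ S} := by
  obtain ⟨s, t, hst⟩ := hx
  refine ⟨FreeGroup.mk s, pathIn_iff_forall_prefix.mpr fun q hq ↦ ?_⟩
  rw [Set.mem_ofPred_eq, FreeGroup.mul_mk]
  refine pathIn_iff_forall_prefix.mp hw _ ?_
  rw [← hst, List.append_assoc]
  exact (List.prefix_append_right_inj s).mpr (hq.trans (List.prefix_append _ _))

lemma pathIn.one_mem (hw : pathIn w S) : (1 : F n) ∈ S :=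
  pathIn_iff_forall_prefix.mp hw [] List.nil_prefix

end Paths

section Axes

variable {n : ℕ} {a g h : F n}

/-- The vertex set of the axis of `a` in the Cayley tree: the points which `a` displaces by its
translation length. By this convention every vertex lies on the axis of `1`. -/
def axis (a : F n) : Set (F n) := {h | wlen (h⁻¹ * a * h) = cycLen a}

lemma cycLen_eq_sInf_range (a : F n) : cycLen a = sInf (Set.range fun h ↦ wlen (h⁻¹ * a * h)) :=
  rfl

lemma cycLen_le_wlen_conj (a h : F n) : cycLen a ≤ wlen (h⁻¹ * a * h) :=
  Nat.sInf_le (Set.mem_range_self h)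

lemma mem_axis_iff_wlen_conj_le : h ∈ axis a ↔ wlen (h⁻¹ * a * h) ≤ cycLen a :=
  ⟨le_of_eq, fun hle ↦ hle.antisymm (cycLen_le_wlen_conj a h)⟩

lemma one_mem_axis_iff : 1 ∈ axis a ↔ wlen a = cycLen a := by
  simp only [axis, Set.mem_ofPred_eq, inv_one, one_mul, mul_one]

lemma axis_nonempty (a : F n) : (axis a).Nonempty :=
  Nat.sInf_mem (Set.range_nonempty fun h ↦ wlen (h⁻¹ * a * h))

lemma cycLen_conj (a g : F n) : cycLen (g⁻¹ * a * g) = cycLen a := by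
  have hconj (h : F n) : h⁻¹ * (g⁻¹ * a * g) * h = (g * h)⁻¹ * a * (g * h) := by group
  simp only [cycLen_eq_sInf_range, hconj]
  exact congrArg sInf ((Equiv.mulLeft g).surjective.range_comp fun h ↦ wlen (h⁻¹ * a * h))

lemma mul_mem_axis_iff : g * h ∈ axis a ↔ h ∈ axis (g⁻¹ * a * g) := by
  have hconj : (g * h)⁻¹ * a * (g * h) = h⁻¹ * (g⁻¹ * a * g) * h := by group
  simp only [axis, Set.mem_ofPred_eq, cycLen_conj, hconj]

lemma isCyclicallyReduced_rword_of_one_mem_axis (ha : 1 ∈ axis a) :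
    FreeGroup.IsCyclicallyReduced (rword a) :=
  isCyclicallyReduced_toWord_of_forall_norm_le_conj fun h ↦
    (one_mem_axis_iff.mp ha).trans_le (cycLen_le_wlen_conj a h)

lemma rword_pow_of_one_mem_axis (ha : 1 ∈ axis a) (k : ℕ) :
    rword (a ^ k) = (List.replicate k (rword a)).flatten :=
  toWord_pow_of_isCyclicallyReduced (isCyclicallyReduced_rword_of_one_mem_axis ha) k

lemma le_wlen_pow_of_one_mem_axis (ha : 1 ∈ axis a) (ha1 : a ≠ 1) (k : ℕ) : k ≤ wlen (a ^ k) := by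
  have hpos : 0 < wlen a := Nat.pos_of_ne_zero fun h ↦ ha1 (FreeGroup.norm_eq_zero.mp h)
  calc
    k ≤ k * wlen a := Nat.le_mul_of_pos_right k hpos
    _ = wlen (a ^ k) := by
      rw [wlen, wlen, rword_pow_of_one_mem_axis ha, List.length_flatten, List.map_replicate,
        List.sum_replicate, smul_eq_mul]

lemma pathIn_pow_axis (ha : 1 ∈ axis a) (k : ℕ) : pathIn (a ^ k) (axis a) := by
  refine pathIn_iff_forall_prefix.mpr fun q hq ↦ mem_axis_iff_wlen_conj_le.mpr ?_
  rw [rword_pow_of_one_mem_axis ha] at hq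
  calc
    wlen ((FreeGroup.mk q)⁻¹ * a * FreeGroup.mk q)
      = ((FreeGroup.mk q)⁻¹ * FreeGroup.mk (rword a) * FreeGroup.mk q).norm := by
        rw [rword, FreeGroup.mk_toWord]
        rfl
    _ ≤ wlen a := norm_conj_mk_le_of_prefix_flatten_replicate hq
    _ = cycLen a := one_mem_axis_iff.mp ha

end Axes

section Trees

variable {n : ℕ} {B : Subgroup (F n)} {g h : F n}

lemma mem_treeVerts_iff_exists_mem_axis :
    h ∈ treeVerts B ↔ ∃ a ∈ B, a ≠ 1 ∧ h ∈ axis a := Iff.rfl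

lemma treeVerts_nonempty (hB : B ≠ ⊥) : (treeVerts B).Nonempty := by
  obtain ⟨a, haB, ha1⟩ := B.bot_or_exists_ne_one.resolve_left hB
  obtain ⟨h, hh⟩ := axis_nonempty a
  exact ⟨h, a, haB, ha1, hh⟩

lemma mul_mem_treeVerts_iff : g * h ∈ treeVerts B ↔ h ∈ treeVerts (conjSub g⁻¹ B) := by
  simp only [mem_treeVerts_iff_exists_mem_axis, mul_mem_axis_iff, conjSub,
    Subgroup.mem_map, MulEquiv.coe_toMonoidHom, MulAut.conj_apply, inv_inv]
  constructor
  · rintro ⟨a, haB, ha1, hh⟩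
    exact ⟨_, ⟨a, haB, rfl⟩, by simpa [mul_assoc, inv_mul_eq_one] using ha1, hh⟩
  · rintro ⟨_, ⟨a, haB, rfl⟩, ha1, hh⟩
    exact ⟨a, haB, by rintro rfl; simp at ha1, hh⟩

lemma conjSub_conjSub (g h : F n) (B : Subgroup (F n)) :
    conjSub g (conjSub h B) = conjSub (g * h) B := by
  rw [conjSub, conjSub, conjSub, Subgroup.map_map, map_mul]
  rfl

lemma exists_wlen_eq_pathIn_treeVerts (hB : (1 : F n) ∈ treeVerts B) (k : ℕ) :
    ∃ w : F n, wlen w = k ∧ pathIn w (treeVerts B) := by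
  obtain ⟨a, haB, ha1, ha⟩ := mem_treeVerts_iff_exists_mem_axis.mp hB
  obtain ⟨w, hw, hpath⟩ := (pathIn_pow_axis ha k).exists_wlen_eq
    (le_wlen_pow_of_one_mem_axis ha ha1 k)
  exact ⟨w, hw, fun m hm ↦ ⟨a, haB, ha1, hpath m hm⟩⟩

end Trees

section AvoidingWords

variable {n r : ℕ} {A : Fin r → Subgroup (F n)} {i : Fin r} {w : F n}

lemma notMem_FmA_of_pathIn_treeVerts {g : F n} (hw : pathIn w (treeVerts (conjSub g (A i))))
    (L : ℕ) : w ∉ FmA A L := by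
  rintro ⟨x, ⟨-, hx⟩, hxw⟩
  obtain ⟨s, hs⟩ := hw.exists_translate_of_infix hxw
  simp only [mul_mem_treeVerts_iff, conjSub_conjSub, Set.ofPred_mem_eq] at hs
  exact hx i _ ⟨⟨s⁻¹ * g, rfl⟩, hs.one_mem⟩ hs

theorem statement_12_general (hA : A i ≠ ⊥) (L k : ℕ) :
    ∃ w : F n, wlen w = k ∧ w ∉ FmA A L := by
  obtain ⟨g, hg⟩ := treeVerts_nonempty hA
  have hbase : (1 : F n) ∈ treeVerts (conjSub g⁻¹ (A i)) :=
    mul_mem_treeVerts_iff.mp ((mul_one g).symm ▸ hg)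
  obtain ⟨w, hw, hpath⟩ := exists_wlen_eq_pathIn_treeVerts hbase k
  exact ⟨w, hw, notMem_FmA_of_pathIn_treeVerts hpath L⟩

end AvoidingWords

/-- If r ≥ 1 then for every k ≥ 1 the set S_k is nonempty. -/
theorem statement_12 (n r L : ℕ) (hn : 3 ≤ n) (hr : 1 ≤ r) (A : Fin r → Subgroup (F n))
    (hsys : IsSystem A) (hmal : SystemMalnormal A) (hL : 1 ≤ L)
    (hdiam : DiamBound A L) (hbase : ∀ i, (1 : F n) ∈ treeVerts (A i)) :
    ∀ k : ℕ, 1 ≤ k → ∃ w : F n, wlen w = k ∧ w ∉ FmA A L :=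
  fun k _ ↦ statement_12_general (hsys.2.1 ⟨0, hr⟩) L k

end RelCurr
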